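/- Let r ≤ d, let f : ℝ^{d×r} → ℝ be differentiable with gradient ∇f, assume ∇f is L-Lipschitz on ℝ^{d×r} with respect to the Frobenius norm, and assume ‖∇f(z)‖₂ ≤ L_n for every z with zᵀz = I_r. For x with xᵀx = I_r define grad f(x) := ∇f(x) − (1/2)x(xᵀ∇f(x) + ∇f(x)ᵀx). Then for all x, y with xᵀx = I_r and yᵀy = I_r: ‖grad f(x) − grad f(y)‖_F ≤ (L + 2 L_n) ‖x − y‖_F. -/

import Mathlib

open Matrix

attribute [local instance] Matrix.normedAddCommGroup Matrix.normedSpace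

/-- Frobenius norm of a real matrix. -/
noncomputable def frobNorm {m n : ℕ} (A : Matrix (Fin m) (Fin n) ℝ) : ℝ :=
  Real.sqrt (∑ i, ∑ j, (A i j) ^ 2)

/-- Spectral (operator) norm of a real matrix. -/
noncomputable def specNorm {m n : ℕ} (A : Matrix (Fin m) (Fin n) ℝ) : ℝ :=
  ‖LinearMap.toContinuousLinearMap (Matrix.toEuclideanLin A)‖

/-- Frobenius inner product `⟨A, B⟩ = trace (AᵀB)` of real matrices. -/
noncomputable def finner {m n : ℕ} (A B : Matrix (Fin m) (Fin n) ℝ) : ℝ :=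
  (Aᵀ * B).trace

lemma specNorm_transpose {m n : ℕ} (A : Matrix (Fin m) (Fin n) ℝ) : specNorm Aᵀ = specNorm A := by
  have := Matrix.l2_opNorm_conjTranspose (𝕜 := ℝ) A
  rw [Matrix.conjTranspose_eq_transpose_of_trivial] at this
  exact this

lemma specNorm_nonneg {m n : ℕ} (A : Matrix (Fin m) (Fin n) ℝ) : 0 ≤ specNorm A := norm_nonneg _

lemma specNorm_le_one {m n : ℕ} (A : Matrix (Fin m) (Fin n) ℝ) (h : Aᵀ * A = 1) :
    specNorm A ≤ 1 := by
  have h1 : specNorm (Aᴴ * A) = specNorm A * specNorm A :=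
    Matrix.l2_opNorm_conjTranspose_mul_self (𝕜 := ℝ) A
  rw [Matrix.conjTranspose_eq_transpose_of_trivial, h] at h1
  have h2 : specNorm (1 : Matrix (Fin n) (Fin n) ℝ) ≤ 1 := by
    unfold specNorm
    refine ContinuousLinearMap.opNorm_le_bound _ zero_le_one fun v => ?_
    simp
  nlinarith [specNorm_nonneg A]

lemma frobNorm_nonneg {m n : ℕ} (A : Matrix (Fin m) (Fin n) ℝ) : 0 ≤ frobNorm A :=
  Real.sqrt_nonneg _

lemma frobNorm_sq {m n : ℕ} (A : Matrix (Fin m) (Fin n) ℝ) :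
    frobNorm A ^ 2 = ∑ i, ∑ j, (A i j) ^ 2 :=
  Real.sq_sqrt (Finset.sum_nonneg fun _ _ => Finset.sum_nonneg fun _ _ => sq_nonneg _)

lemma frobNorm_transpose {m n : ℕ} (A : Matrix (Fin m) (Fin n) ℝ) :
    frobNorm Aᵀ = frobNorm A := by
  unfold frobNorm
  rw [Finset.sum_comm]
  rfl

lemma frobNorm_sq_trace {m n : ℕ} (A : Matrix (Fin m) (Fin n) ℝ) :
    frobNorm A ^ 2 = (Aᵀ * A).trace := by
  rw [frobNorm_sq, Finset.sum_comm]
  simp [Matrix.trace, Matrix.mul_apply, sq]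

lemma frobNorm_eq {m n : ℕ} (A : Matrix (Fin m) (Fin n) ℝ) :
    frobNorm A = Matrix.frobeniusNormedAddCommGroup.toNorm.norm A := by
  rw [Matrix.frobenius_norm_def, ← Real.sqrt_eq_rpow]
  simp [frobNorm]

lemma frobNorm_add_le {m n : ℕ} (A B : Matrix (Fin m) (Fin n) ℝ) :
    frobNorm (A + B) ≤ frobNorm A + frobNorm B := by
  simp only [frobNorm_eq]
  exact @norm_add_le _ Matrix.frobeniusNormedAddCommGroup.toSeminormedAddCommGroup.toSeminormedAddGroup A B

lemma frobNorm_smul {m n : ℕ} (c : ℝ) (A : Matrix (Fin m) (Fin n) ℝ) :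
    frobNorm (c • A) = |c| * frobNorm A := by
  unfold frobNorm
  rw [← Real.sqrt_sq_eq_abs, ← Real.sqrt_mul (sq_nonneg c)]
  simp [mul_pow, Finset.mul_sum]

lemma frobNorm_mul_le {m n p : ℕ} (A : Matrix (Fin m) (Fin n) ℝ) (B : Matrix (Fin n) (Fin p) ℝ) :
    frobNorm (A * B) ≤ specNorm A * frobNorm B := by
  refine (sq_le_sq₀ (frobNorm_nonneg _)
    (mul_nonneg (specNorm_nonneg _) (frobNorm_nonneg _))).1 ?_
  rw [mul_pow, frobNorm_sq, frobNorm_sq, Finset.sum_comm,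
    Finset.sum_comm (f := fun i j => (B i j) ^ 2), Finset.mul_sum]
  refine Finset.sum_le_sum fun j _ => ?_
  have h := (LinearMap.toContinuousLinearMap (Matrix.toEuclideanLin A)).le_opNorm
    (WithLp.toLp 2 (fun i => B i j))
  have h2 := pow_le_pow_left₀ (norm_nonneg _) h 2
  rw [mul_pow, EuclideanSpace.norm_sq_eq, EuclideanSpace.norm_sq_eq] at h2
  simpa [Matrix.mul_apply, Matrix.mulVec, dotProduct, specNorm] using h2

lemma frobNorm_mul_le' {m n p : ℕ} (A : Matrix (Fin m) (Fin n) ℝ) (B : Matrix (Fin n) (Fin p) ℝ) :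
    frobNorm (A * B) ≤ frobNorm A * specNorm B := by
  have h := frobNorm_mul_le Bᵀ Aᵀ
  rw [← Matrix.transpose_mul, frobNorm_transpose, frobNorm_transpose, specNorm_transpose] at h
  linarith

lemma frobNorm_proj_le {d r : ℕ} (x M : Matrix (Fin d) (Fin r) ℝ) (hx : xᵀ * x = 1) :
    frobNorm (M - (1 / 2 : ℝ) • (x * (xᵀ * M + Mᵀ * x))) ≤ frobNorm M := by
  refine (sq_le_sq₀ (frobNorm_nonneg _) (frobNorm_nonneg _)).1 ?_
  set S := xᵀ * M + Mᵀ * x with hS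
  have hST : Sᵀ = S := by simp [hS, add_comm]
  have key : frobNorm (M - (1 / 2 : ℝ) • (x * S)) ^ 2 = frobNorm M ^ 2 - 1 / 4 * frobNorm S ^ 2 := by
    have e1 : (x * S)ᵀ * (x * S) = S * S := by
      rw [Matrix.transpose_mul, hST, Matrix.mul_assoc, ← Matrix.mul_assoc xᵀ, hx, Matrix.one_mul]
    have e2 : ((x * S)ᵀ * M).trace = (Mᵀ * (x * S)).trace := by
      rw [← Matrix.trace_transpose, Matrix.transpose_mul, Matrix.transpose_transpose]
    have e3 : ((x * S)ᵀ * M).trace + (Mᵀ * (x * S)).trace = (S * S).trace := by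
      conv_rhs => rw [hS, ← hS, Matrix.add_mul, Matrix.trace_add]
      rw [Matrix.transpose_mul, hST, Matrix.mul_assoc, Matrix.trace_mul_comm S, Matrix.mul_assoc Mᵀ]
    rw [frobNorm_sq_trace, frobNorm_sq_trace, frobNorm_sq_trace, hST]
    simp only [Matrix.transpose_sub, Matrix.transpose_smul, Matrix.sub_mul, Matrix.mul_sub,
      Matrix.smul_mul, Matrix.mul_smul, Matrix.trace_sub, Matrix.trace_smul, smul_eq_mul, e1]
    linarith
  rw [key]
  nlinarith [sq_nonneg (frobNorm S)]

/-- **Lipschitz continuity of the Riemannian gradient on the Stiefel manifold.**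
If `f` is differentiable with gradient `Df`, `Df` is `L`-Lipschitz in Frobenius norm on
`ℝ^{d×r}` and `‖Df z‖₂ ≤ Ln` on `St(d,r)`, then with
`grad f x = Df x − (1/2)x(xᵀ Df x + (Df x)ᵀ x)` one has, for all `x, y ∈ St(d,r)`,
`‖grad f x − grad f y‖_F ≤ (L + 2 Ln)‖x − y‖_F`. -/
theorem riemannian_gradient_lipschitz
    (d r : ℕ) (hdr : r ≤ d) (L Ln : ℝ)
    (f : Matrix (Fin d) (Fin r) ℝ → ℝ) (Df : Matrix (Fin d) (Fin r) ℝ → Matrix (Fin d) (Fin r) ℝ)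
    (hdiff : Differentiable ℝ f)
    (hgrad : ∀ z h, fderiv ℝ f z h = finner (Df z) h)
    (hLip : ∀ a b, frobNorm (Df a - Df b) ≤ L * frobNorm (a - b))
    (hbound : ∀ z : Matrix (Fin d) (Fin r) ℝ, zᵀ * z = 1 → specNorm (Df z) ≤ Ln) :
    ∀ x y : Matrix (Fin d) (Fin r) ℝ, xᵀ * x = 1 → yᵀ * y = 1 →
      frobNorm ((Df x - (1 / 2 : ℝ) • (x * (xᵀ * Df x + (Df x)ᵀ * x))) -
          (Df y - (1 / 2 : ℝ) • (y * (yᵀ * Df y + (Df y)ᵀ * y)))) ≤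
        (L + 2 * Ln) * frobNorm (x - y) := by
  intro x y hx hy
  have hB := hbound y hy
  have hL := hLip x y
  generalize Df y = B at *
  generalize Df x = A at *
  have sx := specNorm_le_one x hx
  have sy := specNorm_le_one y hy
  have sB := specNorm_nonneg B
  have sx0 := specNorm_nonneg x
  have sy0 := specNorm_nonneg y
  have hD := frobNorm_nonneg (x - y)
  set D := x - y with hDdef
  have hLn : 0 ≤ Ln := sB.trans hB
  have b1 : frobNorm (D * (yᵀ * B)) ≤ Ln * frobNorm D := by
    rw [← Matrix.mul_assoc]
    have h1 := frobNorm_mul_le' (D * yᵀ) B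
    have h2 := frobNorm_mul_le' D yᵀ
    rw [specNorm_transpose] at h2
    have h3 : frobNorm (D * yᵀ) ≤ frobNorm D := by nlinarith
    nlinarith [mul_le_mul h3 hB sB hD]
  have b2 : frobNorm (D * (Bᵀ * y)) ≤ Ln * frobNorm D := by
    rw [← Matrix.mul_assoc]
    have h1 := frobNorm_mul_le' (D * Bᵀ) y
    have h2 := frobNorm_mul_le' D Bᵀ
    rw [specNorm_transpose] at h2
    nlinarith [frobNorm_nonneg (D * Bᵀ)]
  have b3 : frobNorm (x * (Dᵀ * B)) ≤ Ln * frobNorm D := by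
    have h1 := frobNorm_mul_le x (Dᵀ * B)
    have h2 := frobNorm_mul_le' Dᵀ B
    rw [frobNorm_transpose] at h2
    nlinarith [frobNorm_nonneg (Dᵀ * B)]
  have b4 : frobNorm (x * (Bᵀ * D)) ≤ Ln * frobNorm D := by
    have h1 := frobNorm_mul_le x (Bᵀ * D)
    have h2 := frobNorm_mul_le Bᵀ D
    rw [specNorm_transpose] at h2
    nlinarith [frobNorm_nonneg (Bᵀ * D)]
  have hp := frobNorm_proj_le x (A - B) hx
  have e : (A - (1 / 2 : ℝ) • (x * (xᵀ * A + Aᵀ * x))) -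
      (B - (1 / 2 : ℝ) • (y * (yᵀ * B + Bᵀ * y))) =
      ((A - B) - (1 / 2 : ℝ) • (x * (xᵀ * (A - B) + (A - B)ᵀ * x))) +
      (-(1 / 2) : ℝ) • ((D * (yᵀ * B) + D * (Bᵀ * y)) + (x * (Dᵀ * B) + x * (Bᵀ * D))) := by
    rw [hDdef]
    simp only [Matrix.transpose_sub, Matrix.sub_mul, Matrix.mul_sub, Matrix.mul_add]
    module
  rw [e]
  have t1 := frobNorm_add_le ((A - B) - (1 / 2 : ℝ) • (x * (xᵀ * (A - B) + (A - B)ᵀ * x)))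
    ((-(1 / 2) : ℝ) • ((D * (yᵀ * B) + D * (Bᵀ * y)) + (x * (Dᵀ * B) + x * (Bᵀ * D))))
  rw [frobNorm_smul, abs_neg, abs_of_pos (by norm_num : (0 : ℝ) < 1 / 2)] at t1
  have t2 := frobNorm_add_le (D * (yᵀ * B) + D * (Bᵀ * y)) (x * (Dᵀ * B) + x * (Bᵀ * D))
  have t3 := frobNorm_add_le (D * (yᵀ * B)) (D * (Bᵀ * y))
  have t4 := frobNorm_add_le (x * (Dᵀ * B)) (x * (Bᵀ * D))
  linarith
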